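/- Let $n \geq 1$ and $m \geq n$ be integers, let $f : \mathbb{R} \to \mathbb{R}$ be any function, and suppose $u, v \in C^{\infty}([0,1))$ both satisfy the differential equation $w^{(n)}(t) = f(w(t))$ for all $t \in [0,1)$ together with the initial conditions $w(0) = w'(0) = \cdots = w^{(m-1)}(0) = 0$ and $w^{(m)}(0) = a$ for the same real number $a \neq 0$. Then there exists $\delta > 0$ such that $u(t) = v(t)$ for all $t \in [0,\delta]$. -/

import Mathlib

/-!
By Taylor's theorem both solutions are asymptotic to `a * t ^ m / m !`. Hence, by continuity, each
value `v t` is attained by `u` at some time `s` with `s / t → 1`, and the unknown function `f` drops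
out: `v⁽ⁿ⁾ t = f (v t) = f (u s) = u⁽ⁿ⁾ s`. Cauchy's mean value theorem between `s` and `t` then
bounds `t ^ n * |u⁽ⁿ⁾ t - v⁽ⁿ⁾ t|` by `C * |u t - v t|` for every `C` above the limit of
`t ^ n * u⁽ⁿ⁺¹⁾ / u'`. This limit is `(1 - n / m) * m.descFactorial n`, so one can take
`C < m.descFactorial n`. On the other hand, integrating `|w⁽ⁿ⁾| ≤ c * t ^ (m - n)` from `0`
`n` times gives `|w| ≤ c / m.descFactorial n * t ^ m`. So a bound `|u - v| ≤ K * t ^ m` improves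
itself by the factor `C / m.descFactorial n < 1`, and iterating it yields `u = v`.
-/

open Set Filter Topology
open scoped Nat

lemma nhdsGT_le_nhdsWithin_Ico {α : Type*} [TopologicalSpace α] [LinearOrder α]
    [ClosedIciTopology α] {x y : α} (hxy : x < y) : 𝓝[>] x ≤ 𝓝[Ico x y] x := by
  rw [nhdsWithin_Ico_eq_nhdsGE hxy]
  exact nhdsWithin_mono x Ioi_subset_Ici_self

section VectorValued

variable {E : Type*} [NormedAddCommGroup E] [NormedSpace ℝ E] {w : ℝ → E} {T : ℝ} {n m : ℕ}

lemma tendsto_inv_pow_smul_of_iteratedDerivWithin_eq_zero (hT : 0 < T)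
    (hw : ContDiffOn ℝ m w (Ico 0 T)) (h0 : ∀ j < m, iteratedDerivWithin j w (Ico 0 T) 0 = 0) :
    Tendsto (fun t ↦ (t ^ m)⁻¹ • w t) (𝓝[>] 0)
      (𝓝 ((m ! : ℝ)⁻¹ • iteratedDerivWithin m w (Ico 0 T) 0)) := by
  have htaylor (t : ℝ) : taylorWithinEval w m (Ico 0 T) 0 t =
      (t ^ m / m ! : ℝ) • iteratedDerivWithin m w (Ico 0 T) 0 := by
    rw [taylor_within_apply, Finset.sum_range_succ, Finset.sum_eq_zero, zero_add, sub_zero,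
      div_eq_inv_mul]
    intro j hj
    rw [h0 j (Finset.mem_range.1 hj), smul_zero]
  have hrem := (taylor_tendsto (convex_Ico 0 T) (left_mem_Ico.2 hT) hw).mono_left
    (nhdsGT_le_nhdsWithin_Ico hT)
  have hmain := hrem.add_const ((m ! : ℝ)⁻¹ • iteratedDerivWithin m w (Ico 0 T) 0)
  rw [zero_add] at hmain
  refine hmain.congr' ?_
  filter_upwards [self_mem_nhdsWithin] with t (ht : 0 < t)
  rw [htaylor, sub_zero, smul_sub, smul_smul, inv_mul_eq_div,
    div_div_cancel_left' (by positivity), sub_add_cancel]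

lemma tendsto_pow_div_pow_smul_iteratedDerivWithin (hT : 0 < T) {k : ℕ}
    (hw : ContDiffOn ℝ (max k m : ℕ) w (Ico 0 T))
    (h0 : ∀ j < m, iteratedDerivWithin j w (Ico 0 T) 0 = 0) :
    Tendsto (fun t ↦ (t ^ k / t ^ m) • iteratedDerivWithin k w (Ico 0 T) t) (𝓝[>] 0)
      (𝓝 ((m.descFactorial k / m ! : ℝ) • iteratedDerivWithin m w (Ico 0 T) 0)) := by
  induction k generalizing m w with
  | zero =>
    rw [Nat.zero_max] at hw
    simpa using tendsto_inv_pow_smul_of_iteratedDerivWithin_eq_zero hT hw h0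
  | succ k ih =>
    cases m with
    | zero =>
      have hcont := (hw.continuousOn_iteratedDerivWithin (m := k + 1) (by simp)
        (uniqueDiffOn_Ico 0 T) 0 (left_mem_Ico.2 hT)).tendsto.mono_left
          (nhdsGT_le_nhdsWithin_Ico hT)
      have hpow : Tendsto (fun t : ℝ ↦ t ^ (k + 1)) (𝓝[>] 0) (𝓝 0) := by
        simpa using ((continuous_pow (k + 1)).tendsto (0 : ℝ)).mono_left nhdsWithin_le_nhds
      simpa using hpow.smul hcont
    | succ m =>
      have hw' : ContDiffOn ℝ (max k m : ℕ) (derivWithin w (Ico 0 T)) (Ico 0 T) :=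
        hw.derivWithin (uniqueDiffOn_Ico 0 T) (by norm_cast; omega)
      have hderiv := ih hw' (fun j hj ↦ by
        rw [← iteratedDerivWithin_succ']; exact h0 (j + 1) (by omega))
      simp only [← iteratedDerivWithin_succ'] at hderiv
      rw [Nat.succ_descFactorial_succ, Nat.factorial_succ, Nat.cast_mul, Nat.cast_mul,
        mul_div_mul_left _ _ (by positivity)]
      refine hderiv.congr' ?_
      filter_upwards [self_mem_nhdsWithin] with t (ht : 0 < t)
      rw [pow_succ, pow_succ, mul_div_mul_right _ _ ht.ne']

lemma norm_le_of_norm_derivWithin_le {c δ : ℝ} {p : ℕ} (hδ : δ ≤ T)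
    (hw : DifferentiableOn ℝ w (Ico 0 T)) (h0 : w 0 = 0)
    (hbound : ∀ t ∈ Ico 0 δ, ‖derivWithin w (Ico 0 T) t‖ ≤ c * t ^ p) :
    ∀ t ∈ Ico 0 δ, ‖w t‖ ≤ c / (p + 1) * t ^ (p + 1) := by
  intro t ht
  have hmem {x : ℝ} (hx : x ∈ Icc 0 t) : x ∈ Ico 0 δ := ⟨hx.1, hx.2.trans_lt ht.2⟩
  have hsub : Icc 0 t ⊆ Ico 0 T := fun x hx ↦ Ico_subset_Ico_right hδ (hmem hx)
  have hB (x : ℝ) : HasDerivAt (fun s ↦ c / (p + 1) * s ^ (p + 1)) (c * x ^ p) x := by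
    convert! (hasDerivAt_pow (p + 1) x).const_mul (c / (p + 1)) using 1
    push_cast [Nat.add_sub_cancel]
    field_simp
  refine image_norm_le_of_norm_deriv_right_le_deriv_boundary (hw.continuousOn.mono hsub)
    (fun x hx ↦ ?_) (by simp [h0]) hB (fun x hx ↦ hbound x (hmem (Ico_subset_Icc_self hx)))
    (right_mem_Icc.2 ht.1)
  have hxT := hsub (Ico_subset_Icc_self hx)
  exact ((hw x hxT).hasDerivWithinAt.mono (Ico_subset_Ico_left hx.1)).mono_of_mem_nhdsWithin
    (Ico_mem_nhdsGE hxT.2)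

lemma norm_le_of_norm_iteratedDerivWithin_le {c δ : ℝ} {p : ℕ} (hδ : δ ≤ T)
    (hw : ContDiffOn ℝ n w (Ico 0 T)) (h0 : ∀ k < n, iteratedDerivWithin k w (Ico 0 T) 0 = 0)
    (hbound : ∀ t ∈ Ico 0 δ, ‖iteratedDerivWithin n w (Ico 0 T) t‖ ≤ c * t ^ p) :
    ∀ t ∈ Ico 0 δ, ‖w t‖ ≤ c / (p + n).descFactorial n * t ^ (p + n) := by
  induction n generalizing w with
  | zero => simpa using hbound
  | succ n ih =>
    simp only [iteratedDerivWithin_succ'] at hbound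
    have hderiv := ih (hw.derivWithin (uniqueDiffOn_Ico 0 T) (by norm_cast))
      (fun k hk ↦ by rw [← iteratedDerivWithin_succ']; exact h0 (k + 1) (by omega)) hbound
    have hint := norm_le_of_norm_derivWithin_le hδ (hw.differentiableOn (by simp))
      (by simpa using h0 0 n.succ_pos) hderiv
    rwa [div_div, mul_comm, ← Nat.cast_succ, ← Nat.cast_mul, ← Nat.succ_descFactorial_succ] at hint

lemma norm_le_of_pow_mul_norm_iteratedDerivWithin_le {C K δ : ℝ} (hδ : δ ≤ T) (hnm : n ≤ m)
    (hw : ContDiffOn ℝ n w (Ico 0 T)) (h0 : ∀ k ≤ n, iteratedDerivWithin k w (Ico 0 T) 0 = 0)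
    (hC : 0 ≤ C) (hK : 0 ≤ K)
    (hode : ∀ t ∈ Ioo 0 δ, t ^ n * ‖iteratedDerivWithin n w (Ico 0 T) t‖ ≤ C * ‖w t‖)
    (hbound : ∀ t ∈ Ioo 0 δ, ‖w t‖ ≤ K * t ^ m) :
    ∀ t ∈ Ioo 0 δ, ‖w t‖ ≤ C / m.descFactorial n * K * t ^ m := by
  have hderiv : ∀ t ∈ Ico 0 δ,
      ‖iteratedDerivWithin n w (Ico 0 T) t‖ ≤ C * K * t ^ (m - n) := by
    intro t ht
    rcases ht.1.eq_or_lt with rfl | htpos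
    · rw [h0 n le_rfl, norm_zero]
      positivity
    · refine le_of_mul_le_mul_left ?_ (pow_pos htpos n)
      calc t ^ n * ‖iteratedDerivWithin n w (Ico 0 T) t‖ ≤ C * ‖w t‖ := hode t ⟨htpos, ht.2⟩
        _ ≤ C * (K * t ^ m) := by gcongr; exact hbound t ⟨htpos, ht.2⟩
        _ = t ^ n * (C * K * t ^ (m - n)) := by rw [← pow_mul_pow_sub t hnm]; ring
  have hint := norm_le_of_norm_iteratedDerivWithin_le hδ hw (fun k hk ↦ h0 k hk.le) hderiv
  rw [Nat.sub_add_cancel hnm, mul_div_right_comm] at hint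
  exact fun t ht ↦ hint t (Ioo_subset_Ico_self ht)

/-- The threshold `m.descFactorial n` is the value of `C` for which `w = t ^ m` solves the Euler
equation `t ^ n * w⁽ⁿ⁾ = C * w`. -/
lemma eventuallyEq_zero_of_pow_mul_norm_iteratedDerivWithin_le {C : ℝ} (hT : 0 < T) (hnm : n ≤ m)
    (hw : ContDiffOn ℝ n w (Ico 0 T)) (h0 : ∀ k ≤ n, iteratedDerivWithin k w (Ico 0 T) 0 = 0)
    (hC0 : 0 ≤ C) (hC : C < m.descFactorial n) (hO : w =O[𝓝[>] 0] fun t ↦ t ^ m)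
    (hode : ∀ᶠ t in 𝓝[>] 0, t ^ n * ‖iteratedDerivWithin n w (Ico 0 T) t‖ ≤ C * ‖w t‖) :
    w =ᶠ[𝓝[≥] 0] 0 := by
  obtain ⟨K, hK, hOK⟩ := hO.exists_nonneg
  obtain ⟨δ, ⟨hδ0, hδT⟩, hδ⟩ :=
    (mem_nhdsGT_iff_exists_mem_Ioc_Ioo_subset hT).1 (hode.and hOK.bound)
  set θ : ℝ := C / m.descFactorial n
  have hθ0 : 0 ≤ θ := by positivity
  have hθ1 : θ < 1 := (div_lt_one (hC0.trans_lt hC)).2 hC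
  have hiter (j : ℕ) : ∀ t ∈ Ioo 0 δ, ‖w t‖ ≤ θ ^ j * K * t ^ m := by
    induction j with
    | zero =>
      intro t ht
      simpa [abs_of_pos ht.1] using (hδ ht).2
    | succ j ih =>
      simpa only [pow_succ', mul_assoc] using norm_le_of_pow_mul_norm_iteratedDerivWithin_le hδT
        hnm hw h0 hC0 (by positivity) (fun t ht ↦ (hδ ht).1) ih
  filter_upwards [Ico_mem_nhdsGE hδ0] with t ht
  rcases ht.1.eq_or_lt with rfl | htpos
  · simpa using h0 0 n.zero_le
  have hlim : Tendsto (fun j ↦ θ ^ j * K * t ^ m) atTop (𝓝 0) := by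
    simpa using ((tendsto_pow_atTop_nhds_zero_of_lt_one hθ0 hθ1).mul_const K).mul_const (t ^ m)
  exact norm_le_zero_iff.1 (ge_of_tendsto' hlim fun j ↦ hiter j t ⟨htpos, ht.2⟩)

lemma hasDerivAt_iteratedDerivWithin_Ico {t : ℝ} (hw : ContDiffOn ℝ (n + 1 : ℕ) w (Ico 0 T))
    (ht : t ∈ Ioo 0 T) :
    HasDerivAt (iteratedDerivWithin n w (Ico 0 T))
      (iteratedDerivWithin (n + 1) w (Ico 0 T) t) t := by
  rw [iteratedDerivWithin_succ]
  exact (hw.differentiableOn_iteratedDerivWithin (by norm_cast; omega) (uniqueDiffOn_Ico 0 T) t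
    (Ioo_subset_Ico_self ht)).hasDerivWithinAt.hasDerivAt (Ico_mem_nhds ht.1 ht.2)

end VectorValued

lemma abs_sub_le_mul_abs_sub_of_abs_deriv_le {f f' g g' : ℝ → ℝ} {x y M : ℝ}
    (hf : ∀ ξ ∈ uIcc x y, HasDerivAt f (f' ξ) ξ) (hg : ∀ ξ ∈ uIcc x y, HasDerivAt g (g' ξ) ξ)
    (hf' : ∀ ξ ∈ uIcc x y, f' ξ ≠ 0) (hle : ∀ ξ ∈ uIcc x y, |g' ξ| ≤ M * |f' ξ|) :
    |g y - g x| ≤ M * |f y - f x| := by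
  wlog hxy : x ≤ y generalizing x y
  · rw [abs_sub_comm (g y), abs_sub_comm (f y)]
    rw [uIcc_comm] at hf hg hf' hle
    exact this hf hg hf' hle (le_of_not_ge hxy)
  rcases hxy.eq_or_lt with rfl | hlt
  · simp
  rw [uIcc_of_le hxy] at hf hg hf' hle
  obtain ⟨ξ, hξ, hslope⟩ := exists_ratio_hasDerivAt_eq_ratio_slope f f' hlt
    (fun z hz ↦ (hf z hz).continuousAt.continuousWithinAt)
    (fun z hz ↦ hf z (Ioo_subset_Icc_self hz)) g g'
    (fun z hz ↦ (hg z hz).continuousAt.continuousWithinAt)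
    (fun z hz ↦ hg z (Ioo_subset_Icc_self hz))
  replace hξ := Ioo_subset_Icc_self hξ
  refine le_of_mul_le_mul_right ?_ (abs_pos.2 (hf' ξ hξ))
  calc |g y - g x| * |f' ξ| = |f y - f x| * |g' ξ| := by rw [← abs_mul, hslope, abs_mul]
    _ ≤ |f y - f x| * (M * |f' ξ|) := by gcongr; exact hle ξ hξ
    _ = M * |f y - f x| * |f' ξ| := by ring

section OrderedField

variable {𝕜 : Type*} [Field 𝕜] [LinearOrder 𝕜] [IsStrictOrderedRing 𝕜] [TopologicalSpace 𝕜]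
  [OrderTopology 𝕜] {c d : 𝕜}

lemma tendsto_const_mul_nhdsGT_zero (hc : 0 < c) : Tendsto (c * ·) (𝓝[>] 0) (𝓝[>] 0) :=
  tendsto_iff_comap.2 (comap_mulLeft_nhdsGT_zero hc).ge

lemma eventually_forall_mem_Icc_mul {P : 𝕜 → Prop} (hc : 0 < c) (hd : 0 < d)
    (hP : ∀ᶠ t in 𝓝[>] 0, P t) : ∀ᶠ t in 𝓝[>] 0, ∀ s ∈ Icc (c * t) (d * t), P s :=
  ((tendsto_const_mul_nhdsGT_zero hc).Icc (tendsto_const_mul_nhdsGT_zero hd)).eventually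
    hP.smallSets

end OrderedField

lemma tendsto_comp_const_mul_div_pow {u : ℝ → ℝ} {b c : ℝ} {m : ℕ} (hc : 0 < c)
    (hu : Tendsto (fun t ↦ u t / t ^ m) (𝓝[>] 0) (𝓝 b)) :
    Tendsto (fun t ↦ u (c * t) / t ^ m) (𝓝[>] 0) (𝓝 (c ^ m * b)) := by
  refine ((hu.comp (tendsto_const_mul_nhdsGT_zero hc)).const_mul (c ^ m)).congr fun t ↦ ?_
  rw [Function.comp_apply, mul_pow, ← mul_div_assoc, mul_div_mul_left _ _ (by positivity)]

lemma isBigO_pow_of_tendsto_div_pow {u : ℝ → ℝ} {b : ℝ} {m : ℕ}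
    (hu : Tendsto (fun t ↦ u t / t ^ m) (𝓝[>] 0) (𝓝 b)) : u =O[𝓝[>] 0] fun t ↦ t ^ m := by
  refine Asymptotics.isBigO_of_div_tendsto_nhds ?_ b hu
  filter_upwards [self_mem_nhdsWithin] with t (ht : 0 < t) hpow
  exact absurd hpow (by positivity)

lemma eventually_exists_mem_Icc_eq {u v : ℝ → ℝ} {b c d : ℝ} {m : ℕ} (hm : m ≠ 0) (hb : b ≠ 0)
    (hc : 0 < c) (hc1 : c < 1) (hd : 1 < d) (hcont : ∀ᶠ t in 𝓝[>] 0, ContinuousAt u t)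
    (hu : Tendsto (fun t ↦ u t / t ^ m) (𝓝[>] 0) (𝓝 b))
    (hv : Tendsto (fun t ↦ v t / t ^ m) (𝓝[>] 0) (𝓝 b)) :
    ∀ᶠ t in 𝓝[>] 0, ∃ s ∈ Icc (c * t) (d * t), u s = v t := by
  have hd0 : 0 < d := zero_lt_one.trans hd
  have hratio {e : ℝ} (he : 0 < e) : Tendsto (fun t ↦ u (e * t) / v t) (𝓝[>] 0) (𝓝 (e ^ m)) := by
    have hdiv := (tendsto_comp_const_mul_div_pow he hu).div hv hb
    rw [mul_div_cancel_right₀ _ hb] at hdiv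
    refine hdiv.congr' ?_
    filter_upwards [self_mem_nhdsWithin] with t (ht : 0 < t)
    exact div_div_div_cancel_right₀ (by positivity) _ _
  filter_upwards [(hratio hc).eventually_lt_const (pow_lt_one₀ hc.le hc1 hm),
    (hratio hd0).eventually_const_lt (one_lt_pow₀ hd hm),
    eventually_forall_mem_Icc_mul hc hd0 hcont, self_mem_nhdsWithin]
    with t hlow hhigh hcont (ht : 0 < t)
  have hcd : c * t ≤ d * t := by gcongr; exact (hc1.trans hd).le
  obtain ⟨s, hs, hone⟩ := intermediate_value_Icc (f := fun s ↦ u s / v t) hcd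
    (fun s hs ↦ (hcont s hs).continuousWithinAt.div_const _) ⟨hlow.le, hhigh.le⟩
  exact ⟨s, hs, eq_of_div_eq_one hone⟩

lemma eventually_pow_mul_abs_sub_le {u u' v f g g' h : ℝ → ℝ} {b κ C : ℝ} {n m : ℕ}
    (hm : m ≠ 0) (hb : b ≠ 0)
    (hu : Tendsto (fun t ↦ u t / t ^ m) (𝓝[>] 0) (𝓝 b))
    (hv : Tendsto (fun t ↦ v t / t ^ m) (𝓝[>] 0) (𝓝 b))
    (hgu : ∀ᶠ t in 𝓝[>] 0, g t = f (u t)) (hhv : ∀ᶠ t in 𝓝[>] 0, h t = f (v t))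
    (hu' : ∀ᶠ t in 𝓝[>] 0, HasDerivAt u (u' t) t) (hg' : ∀ᶠ t in 𝓝[>] 0, HasDerivAt g (g' t) t)
    (hne : ∀ᶠ t in 𝓝[>] 0, u' t ≠ 0)
    (hlim : Tendsto (fun t ↦ t ^ n * g' t / u' t) (𝓝[>] 0) (𝓝 κ)) (hC : |κ| < C) :
    ∀ᶠ t in 𝓝[>] 0, t ^ n * |g t - h t| ≤ C * |u t - v t| := by
  obtain ⟨c, hcC, hc0, hc1⟩ : ∃ c : ℝ, |κ| < C * c ^ n ∧ 0 < c ∧ c < 1 := by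
    have hcont : Tendsto (fun c : ℝ ↦ C * c ^ n) (𝓝[<] 1) (𝓝 C) := by
      have : Continuous fun c : ℝ ↦ C * c ^ n := by fun_prop
      simpa using (this.tendsto 1).mono_left nhdsWithin_le_nhds
    exact ((hcont.eventually_const_lt hC).and (Ioo_mem_nhdsLT zero_lt_one)).exists
  have hbound : ∀ᶠ t in 𝓝[>] 0, t ^ n * |g' t| ≤ C * c ^ n * |u' t| := by
    filter_upwards [hlim.abs.eventually_lt_const hcC, hne, self_mem_nhdsWithin]
      with t hlt hne (ht : 0 < t)
    rw [abs_div, abs_mul, abs_of_pos (pow_pos ht n), div_lt_iff₀ (abs_pos.2 hne)] at hlt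
    exact hlt.le
  filter_upwards [
    eventually_exists_mem_Icc_eq hm hb hc0 hc1 one_lt_two (hu'.mono fun _ ↦ (·.continuousAt)) hu hv,
    eventually_forall_mem_Icc_mul hc0 two_pos (hgu.and (hu'.and (hg'.and (hne.and hbound)))),
    hhv, self_mem_nhdsWithin] with t ⟨s, hs, hus⟩ hIcc hht (ht : 0 < t)
  have htmem : t ∈ Icc (c * t) (2 * t) := ⟨by nlinarith, by linarith⟩
  have hsub : uIcc s t ⊆ Icc (c * t) (2 * t) := ordConnected_Icc.uIcc_subset hs htmem
  have hhs : h t = g s := by rw [hht, ← hus, (hIcc s hs).1]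
  have hmvt : |g t - g s| ≤ C / t ^ n * |u t - u s| := by
    refine abs_sub_le_mul_abs_sub_of_abs_deriv_le (fun ξ hξ ↦ (hIcc ξ (hsub hξ)).2.1)
      (fun ξ hξ ↦ (hIcc ξ (hsub hξ)).2.2.1) (fun ξ hξ ↦ (hIcc ξ (hsub hξ)).2.2.2.1) fun ξ hξ ↦ ?_
    rw [div_mul_eq_mul_div, le_div_iff₀' (by positivity)]
    refine le_of_mul_le_mul_left ?_ (pow_pos hc0 n)
    calc c ^ n * (t ^ n * |g' ξ|) = (c * t) ^ n * |g' ξ| := by ring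
      _ ≤ ξ ^ n * |g' ξ| := by gcongr; exact (hsub hξ).1
      _ ≤ C * c ^ n * |u' ξ| := (hIcc ξ (hsub hξ)).2.2.2.2
      _ = c ^ n * (C * |u' ξ|) := by ring
  rwa [hhs, ← hus, ← le_div_iff₀' (by positivity), mul_div_right_comm]

section ScalarValued

variable {u : ℝ → ℝ} {T : ℝ} {n m : ℕ}

lemma tendsto_div_pow_of_iteratedDerivWithin_eq_zero (hT : 0 < T) (hu : ContDiffOn ℝ m u (Ico 0 T))
    (h0 : ∀ k < m, iteratedDerivWithin k u (Ico 0 T) 0 = 0) :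
    Tendsto (fun t ↦ u t / t ^ m) (𝓝[>] 0) (𝓝 (iteratedDerivWithin m u (Ico 0 T) 0 / m !)) := by
  simpa [div_eq_inv_mul] using
    tendsto_inv_pow_smul_of_iteratedDerivWithin_eq_zero hT hu h0

lemma tendsto_mul_derivWithin_div_pow (hT : 0 < T) (hm : 1 ≤ m) (hu : ContDiffOn ℝ m u (Ico 0 T))
    (h0 : ∀ k < m, iteratedDerivWithin k u (Ico 0 T) 0 = 0) :
    Tendsto (fun t ↦ t * derivWithin u (Ico 0 T) t / t ^ m) (𝓝[>] 0)
      (𝓝 (m / m ! * iteratedDerivWithin m u (Ico 0 T) 0)) := by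
  simpa [div_mul_eq_mul_div] using
    tendsto_pow_div_pow_smul_iteratedDerivWithin (k := 1) hT (by rwa [max_eq_right hm]) h0

lemma eventually_derivWithin_ne_zero (hT : 0 < T) (hm : 1 ≤ m) (hu : ContDiffOn ℝ m u (Ico 0 T))
    (h0 : ∀ k < m, iteratedDerivWithin k u (Ico 0 T) 0 = 0)
    (hne : iteratedDerivWithin m u (Ico 0 T) 0 ≠ 0) :
    ∀ᶠ t in 𝓝[>] 0, derivWithin u (Ico 0 T) t ≠ 0 := by
  filter_upwards [(tendsto_mul_derivWithin_div_pow hT hm hu h0).eventually_ne (by positivity)]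
    with t ht hzero
  simp [hzero] at ht

lemma tendsto_pow_mul_iteratedDerivWithin_div_derivWithin (hT : 0 < T) (hm : 1 ≤ m)
    (hu : ContDiffOn ℝ (max (n + 1) m : ℕ) u (Ico 0 T))
    (h0 : ∀ k < m, iteratedDerivWithin k u (Ico 0 T) 0 = 0)
    (hne : iteratedDerivWithin m u (Ico 0 T) 0 ≠ 0) :
    Tendsto (fun t ↦ t ^ n * iteratedDerivWithin (n + 1) u (Ico 0 T) t / derivWithin u (Ico 0 T) t)
      (𝓝[>] 0) (𝓝 (m.descFactorial (n + 1) / m)) := by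
  have hnum := tendsto_pow_div_pow_smul_iteratedDerivWithin hT hu h0
  have hden := tendsto_mul_derivWithin_div_pow hT hm
    (hu.of_le (by exact_mod_cast le_max_right _ _)) h0
  have hm0 : (m : ℝ) ≠ 0 := by positivity
  convert! (hnum.div hden (by positivity)).congr' ?_ using 2
  · rw [smul_eq_mul]
    field_simp
  · filter_upwards [self_mem_nhdsWithin] with t (ht : 0 < t)
    rw [Pi.div_apply, smul_eq_mul, div_mul_eq_mul_div, div_div_div_cancel_right₀ (by positivity),
      pow_succ', mul_assoc, mul_div_mul_left _ _ ht.ne']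

lemma descFactorial_succ_div_lt (hn : 1 ≤ n) (hm : n ≤ m) :
    (m.descFactorial (n + 1) / m : ℝ) < m.descFactorial n := by
  rw [div_lt_iff₀ (by norm_cast; omega), mul_comm, Nat.descFactorial_succ]
  norm_cast
  exact Nat.mul_lt_mul_of_pos_right (by omega) (Nat.descFactorial_pos.2 hm)

lemma eventually_pow_mul_abs_iteratedDerivWithin_sub_le {v f : ℝ → ℝ} {C : ℝ} (hT : 0 < T)
    (hm : 1 ≤ m) (hu : ContDiffOn ℝ (max (n + 1) m : ℕ) u (Ico 0 T))
    (hu0 : ∀ k < m, iteratedDerivWithin k u (Ico 0 T) 0 = 0)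
    (hne : iteratedDerivWithin m u (Ico 0 T) 0 ≠ 0)
    (hv : Tendsto (fun t ↦ v t / t ^ m) (𝓝[>] 0) (𝓝 (iteratedDerivWithin m u (Ico 0 T) 0 / m !)))
    (hueq : ∀ t ∈ Ioo 0 T, iteratedDerivWithin n u (Ico 0 T) t = f (u t))
    (hveq : ∀ t ∈ Ioo 0 T, iteratedDerivWithin n v (Ico 0 T) t = f (v t))
    (hC : m.descFactorial (n + 1) / m < C) :
    ∀ᶠ t in 𝓝[>] 0, t ^ n * |iteratedDerivWithin n u (Ico 0 T) t -
      iteratedDerivWithin n v (Ico 0 T) t| ≤ C * |u t - v t| := by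
  have huM : ContDiffOn ℝ m u (Ico 0 T) := hu.of_le (by norm_cast; omega)
  have huN : ContDiffOn ℝ (n + 1 : ℕ) u (Ico 0 T) := hu.of_le (by norm_cast; omega)
  have hu1 : ContDiffOn ℝ (0 + 1 : ℕ) u (Ico 0 T) := hu.of_le (by norm_cast; omega)
  have hIoo : ∀ᶠ t in 𝓝[>] 0, t ∈ Ioo 0 T := Ioo_mem_nhdsGT hT
  exact eventually_pow_mul_abs_sub_le (by omega) (by positivity)
    (tendsto_div_pow_of_iteratedDerivWithin_eq_zero hT huM hu0) hv
    (hIoo.mono hueq) (hIoo.mono hveq)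
    (hIoo.mono fun t ht ↦ by simpa using hasDerivAt_iteratedDerivWithin_Ico hu1 ht)
    (hIoo.mono fun t ↦ hasDerivAt_iteratedDerivWithin_Ico huN)
    (eventually_derivWithin_ne_zero hT hm huM hu0 hne)
    (tendsto_pow_mul_iteratedDerivWithin_div_derivWithin hT hm hu hu0 hne)
    (by rwa [abs_of_nonneg (by positivity)])

end ScalarValued

theorem ode_uniqueness_high_order_vanishing_general {n m : ℕ} (hn : 1 ≤ n) (hm : n ≤ m)
    {f u v : ℝ → ℝ} {a T : ℝ} (ha : a ≠ 0) (hT : 0 < T)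
    (hu : ContDiffOn ℝ (max (n + 1) m : ℕ) u (Ico 0 T)) (hv : ContDiffOn ℝ m v (Ico 0 T))
    (hueq : ∀ t ∈ Ioo 0 T, iteratedDerivWithin n u (Ico 0 T) t = f (u t))
    (hveq : ∀ t ∈ Ioo 0 T, iteratedDerivWithin n v (Ico 0 T) t = f (v t))
    (hu0 : ∀ k < m, iteratedDerivWithin k u (Ico 0 T) 0 = 0)
    (hum : iteratedDerivWithin m u (Ico 0 T) 0 = a)
    (hv0 : ∀ k < m, iteratedDerivWithin k v (Ico 0 T) 0 = 0)
    (hvm : iteratedDerivWithin m v (Ico 0 T) 0 = a) :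
    ∃ δ > 0, ∀ t ∈ Icc 0 δ, u t = v t := by
  have hm1 : 1 ≤ m := hn.trans hm
  have huM : ContDiffOn ℝ m u (Ico 0 T) := hu.of_le (by norm_cast; omega)
  have hulim := tendsto_div_pow_of_iteratedDerivWithin_eq_zero hT huM hu0
  have hvlim := tendsto_div_pow_of_iteratedDerivWithin_eq_zero hT hv hv0
  rw [hvm, ← hum] at hvlim
  obtain ⟨C, hκC, hC⟩ := exists_between (descFactorial_succ_div_lt hn hm)
  have hlip := eventually_pow_mul_abs_iteratedDerivWithin_sub_le hT hm1 hu hu0 (hum ▸ ha) hvlim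
    hueq hveq hκC
  have hsub {k : ℕ} (hk : k ≤ m) {t : ℝ} (ht : t ∈ Ico 0 T) :
      iteratedDerivWithin k (u - v) (Ico 0 T) t =
        iteratedDerivWithin k u (Ico 0 T) t - iteratedDerivWithin k v (Ico 0 T) t :=
    iteratedDerivWithin_sub ht (uniqueDiffOn_Ico 0 T) ((huM t ht).of_le (by exact_mod_cast hk))
      ((hv t ht).of_le (by exact_mod_cast hk))
  have hzero : ∀ k ≤ n, iteratedDerivWithin k (u - v) (Ico 0 T) 0 = 0 := by
    intro k hk
    rw [hsub (hk.trans hm) (left_mem_Ico.2 hT), sub_eq_zero]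
    rcases (hk.trans hm).eq_or_lt with rfl | hlt
    · rw [hum, hvm]
    · rw [hu0 k hlt, hv0 k hlt]
  have hO : (u - v) =O[𝓝[>] 0] fun t ↦ t ^ m :=
    isBigO_pow_of_tendsto_div_pow ((hulim.sub hvlim).congr fun t ↦ (sub_div _ _ _).symm)
  have hode : ∀ᶠ t in 𝓝[>] 0,
      t ^ n * ‖iteratedDerivWithin n (u - v) (Ico 0 T) t‖ ≤ C * ‖(u - v) t‖ := by
    filter_upwards [hlip, Ioo_mem_nhdsGT hT] with t ht htT
    rwa [hsub hm (Ioo_subset_Ico_self htT)]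
  have huv : u - v =ᶠ[𝓝[≥] 0] 0 :=
    eventuallyEq_zero_of_pow_mul_norm_iteratedDerivWithin_le hT hm
      ((huM.sub hv).of_le (by exact_mod_cast hm)) hzero (le_trans (by positivity) hκC.le) hC hO hode
  obtain ⟨δ, hδ, hδsub⟩ := mem_nhdsGE_iff_exists_Icc_subset.1 huv
  exact ⟨δ, hδ, fun t ht ↦ sub_eq_zero.1 (hδsub ht)⟩

/-- **Uniqueness for `u⁽ⁿ⁾ = f(u)` with high-order vanishing initial data.**
If two smooth solutions on `[0, 1)` of `w⁽ⁿ⁾(t) = f(w(t))` satisfy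
`w(0) = ⋯ = w⁽ᵐ⁻¹⁾(0) = 0` and `w⁽ᵐ⁾(0) = a ≠ 0` with `m ≥ n`, then they agree
near `0`.  No assumption is made on `f`. -/
theorem ode_uniqueness_high_order_vanishing
    (n m : ℕ) (hn : 1 ≤ n) (hm : n ≤ m) (f : ℝ → ℝ) (a : ℝ) (ha : a ≠ 0)
    (u v : ℝ → ℝ)
    (hu : ContDiffOn ℝ (⊤ : ℕ∞) u (Set.Ico (0 : ℝ) 1))
    (hv : ContDiffOn ℝ (⊤ : ℕ∞) v (Set.Ico (0 : ℝ) 1))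
    (hueq : ∀ t ∈ Set.Ico (0 : ℝ) 1,
      iteratedDerivWithin n u (Set.Ico (0 : ℝ) 1) t = f (u t))
    (hveq : ∀ t ∈ Set.Ico (0 : ℝ) 1,
      iteratedDerivWithin n v (Set.Ico (0 : ℝ) 1) t = f (v t))
    (hu0 : ∀ k < m, iteratedDerivWithin k u (Set.Ico (0 : ℝ) 1) 0 = 0)
    (hum : iteratedDerivWithin m u (Set.Ico (0 : ℝ) 1) 0 = a)
    (hv0 : ∀ k < m, iteratedDerivWithin k v (Set.Ico (0 : ℝ) 1) 0 = 0)
    (hvm : iteratedDerivWithin m v (Set.Ico (0 : ℝ) 1) 0 = a) :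
    ∃ δ > (0 : ℝ), ∀ t ∈ Set.Icc (0 : ℝ) δ, u t = v t := by
  exact ode_uniqueness_high_order_vanishing_general hn hm ha one_pos
    (hu.of_le (by exact_mod_cast le_top)) (hv.of_le (by exact_mod_cast le_top))
    (fun t ht ↦ hueq t (Ioo_subset_Ico_self ht)) (fun t ht ↦ hveq t (Ioo_subset_Ico_self ht))
    hu0 hum hv0 hvm
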